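/- For 2 ≤ t ≤ min{m,n}, the ideal of O_q(M_{m,n})[X_{1n}⁻¹] generated by the t×t quantum minors of X equals the ideal generated by the (t−1)×(t−1) quantum minors of the matrix X' (whose entries are X'_{ij} = X_{ij} − q⁻¹X_{1j}X_{in}X_{1n}⁻¹). -/

import Mathlib

noncomputable section
open scoped BigOperators

/-- The defining relations of an `m × n` `q`-quantum matrix. -/
def IsQMat {k A : Type*} [Field k] [Ring A] [Algebra k A] (q : k) {m n : ℕ}
    (X : Fin m → Fin n → A) : Prop :=
  (∀ (i : Fin m) (j l : Fin n), j < l → X i j * X i l = q • (X i l * X i j)) ∧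
  (∀ (i r : Fin m) (j : Fin n), i < r → X i j * X r j = q • (X r j * X i j)) ∧
  (∀ (i r : Fin m) (j l : Fin n), i < r → j < l → X i l * X r j = X r j * X i l) ∧
  (∀ (i r : Fin m) (j l : Fin n), i < r → j < l →
    X i j * X r l - X r l * X i j = (q - q⁻¹) • (X i l * X r j))

/-- The relations defining `O_q(M_{m,n})` as a quotient of the free algebra. -/
inductive QMRel (k : Type*) [Field k] (q : k) (m n : ℕ) :
    FreeAlgebra k (Fin m × Fin n) → FreeAlgebra k (Fin m × Fin n) → Prop
  | row (i : Fin m) (j l : Fin n) (h : j < l) :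
      QMRel k q m n (FreeAlgebra.ι k (i, j) * FreeAlgebra.ι k (i, l))
        (q • (FreeAlgebra.ι k (i, l) * FreeAlgebra.ι k (i, j)))
  | col (i r : Fin m) (j : Fin n) (h : i < r) :
      QMRel k q m n (FreeAlgebra.ι k (i, j) * FreeAlgebra.ι k (r, j))
        (q • (FreeAlgebra.ι k (r, j) * FreeAlgebra.ι k (i, j)))
  | anti (i r : Fin m) (j l : Fin n) (h1 : i < r) (h2 : j < l) :
      QMRel k q m n (FreeAlgebra.ι k (i, l) * FreeAlgebra.ι k (r, j))
        (FreeAlgebra.ι k (r, j) * FreeAlgebra.ι k (i, l))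
  | diag (i r : Fin m) (j l : Fin n) (h1 : i < r) (h2 : j < l) :
      QMRel k q m n (FreeAlgebra.ι k (i, j) * FreeAlgebra.ι k (r, l))
        (FreeAlgebra.ι k (r, l) * FreeAlgebra.ι k (i, j) +
          (q - q⁻¹) • (FreeAlgebra.ι k (i, l) * FreeAlgebra.ι k (r, j)))

/-- The quantum matrix algebra `O_q(M_{m,n})`. -/
abbrev OqM (k : Type*) [Field k] (q : k) (m n : ℕ) := RingQuot (QMRel k q m n)

/-- The canonical generators `X_{ij}` of `O_q(M_{m,n})`. -/
def qX (k : Type*) [Field k] (q : k) (m n : ℕ) (i : Fin m) (j : Fin n) : OqM k q m n :=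
  RingQuot.mkAlgHom k (QMRel k q m n) (FreeAlgebra.ι k (i, j))

/-- The number of inversions (the length `ℓ(σ)`) of a permutation of `Fin t`. -/
def invCount {t : ℕ} (σ : Equiv.Perm (Fin t)) : ℕ :=
  Finset.card (Finset.univ.filter (fun p : Fin t × Fin t => p.1 < p.2 ∧ σ p.2 < σ p.1))

/-- The quantum determinant of a `t × t` matrix with entries in an algebra:
`Σ_σ (-q)^{ℓ(σ)} M_{1,σ(1)} ⋯ M_{t,σ(t)}`. -/
def qdet {k : Type*} [Field k] {A : Type*} [Ring A] [Algebra k A] (q : k) {t : ℕ}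
    (M : Fin t → Fin t → A) : A :=
  ∑ σ : Equiv.Perm (Fin t), ((-q) ^ invCount σ) • (List.ofFn (fun i => M i (σ i))).prod

/-- The quantum minor `[I|J]` of the matrix `X` on rows `I` and columns `J`. -/
def qminor {k : Type*} [Field k] {A : Type*} [Ring A] [Algebra k A] (q : k) {m n t : ℕ}
    (X : Fin m → Fin n → A) (I : Finset (Fin m)) (J : Finset (Fin n))
    (hI : I.card = t) (hJ : J.card = t) : A :=
  qdet q (fun a b => X (I.orderIsoOfFin hI a) (J.orderIsoOfFin hJ b))

/-- The elements `X'_{ij} = X_{ij} - q⁻¹ X_{1j} X_{in} X_{1n}⁻¹` in a localisation of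
`O_q(M_{m,n})` at the normal element `X_{1n}`, where `φ` is the localisation map and
`u = X_{1n}⁻¹`. -/
def Xp {k B : Type*} [Field k] [Ring B] [Algebra k B] (q : k) {m n : ℕ}
    (hm : 0 < m) (hn : 0 < n) (φ : OqM k q m n →ₐ[k] B) (u : B)
    (i : Fin m) (j : Fin n) : B :=
  φ (qX k q m n i j) -
    q⁻¹ • (φ (qX k q m n ⟨0, hm⟩ j) * φ (qX k q m n i ⟨n - 1, by omega⟩) * u)

/-!
Regard the row `i` of `X` as the vector `ρ_i = ∑ j, X_{ij} e_j` with coefficients in the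
`q`-exterior algebra on `e_1, …, e_n`: the coordinates of the ordered product `ρ_I` of the rows
`i ∈ I` are the quantum minors `[I|J]`. The rows of `X'` are `ρ'_i = ρ_i - ρ_1 c_i` with
`c_i = X_{1n}⁻¹ X_{in}`; that is, they are obtained by row reduction at the pivot `X_{1n}`.

Since `ρ_1² = 0`, we have `ρ_1 ρ'_I = ρ_1 ρ_I`, and as the last column of `X'` vanishes, comparing
coordinates gives `[I ∪ {1} | J ∪ {n}] = (-q)^s X_{1n} [I|J]'` for `s = |I|`. Hence the minors of
`X'` lie in the ideal of the minors of `X`.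

Conversely, let `1 ∉ I`. For `a < b` we have `c_a ρ'_b = ρ'_b c_a + (q - q⁻¹) ρ'_a c_b`, so in the
expansion of `ρ_I - ρ'_I` all coefficients `c` can be moved to the right, leaving a combination of
terms `ρ_1 ρ_K c_i = ρ_1 ρ'_K c_i` with `|K| = |I| - 1`. Hence the coordinates of `ρ_I` lie in the
ideal of the minors of `X'`.
-/

namespace QuantumMatrix

section OrderedProd

variable {ι R : Type*} [LinearOrder ι]

/-- The product of the `ρ i` over `i ∈ I`, in increasing order of the indices. -/
def orderedProd [Monoid R] (ρ : ι → R) (I : Finset ι) : R :=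
  (I.sort.map ρ).prod

@[simp]
lemma orderedProd_empty [Monoid R] (ρ : ι → R) : orderedProd ρ ∅ = 1 := by
  simp [orderedProd]

lemma orderedProd_insert [Monoid R] (ρ : ι → R) {a : ι} {I : Finset ι} (h : ∀ b ∈ I, a < b) :
    orderedProd ρ (insert a I) = ρ a * orderedProd ρ I := by
  rw [orderedProd, Finset.sort_insert _ (fun b hb => (h b hb).le) fun ha => (h a ha).false,
    List.map_cons, List.prod_cons, orderedProd]

lemma orderedProd_map {κ : Type*} [LinearOrder κ] [Monoid R] (ρ : κ → R) (f : ι ↪o κ)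
    (I : Finset ι) : orderedProd ρ (I.map f.toEmbedding) = orderedProd (ρ ∘ f) I := by
  rw [orderedProd, orderedProd, ← (f.strictMono.strictMonoOn _).map_finsetSort, List.map_map]
  rfl

lemma orderedProd_eq_prod_ofFn [Monoid R] (ρ : ι → R) {I : Finset ι} {s : ℕ} (hI : I.card = s) :
    orderedProd ρ I = (List.ofFn (ρ ∘ I.orderEmbOfFin hI)).prod := by
  rw [orderedProd, ← Finset.listMap_orderEmbOfFin_finRange I hI, List.map_map,
    List.ofFn_eq_map]

lemma exists_eq_insert_min_of_card_eq_succ {I : Finset ι} {s : ℕ} (hI : I.card = s + 1) :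
    ∃ (a : ι) (I₀ : Finset ι), (∀ b ∈ I₀, a < b) ∧ I = insert a I₀ ∧ I₀.card = s := by
  have hne : I.Nonempty := Finset.card_pos.1 (by omega)
  refine ⟨I.min' hne, I.erase (I.min' hne), fun b hb => ?_,
    (Finset.insert_erase (I.min'_mem hne)).symm, ?_⟩
  · exact Finset.min'_lt_of_mem_erase_min' I hne hb
  · rw [Finset.card_erase_of_mem (I.min'_mem hne), hI, Nat.add_sub_cancel]

end OrderedProd

section SkewFamily

variable {k ι R : Type*} [CommSemiring k] [Semiring R] [Algebra k R]

variable (k) in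
/-- A family of elements of square zero which commute pairwise up to scalars, such as the rows of
a `q`-quantum matrix regarded as vectors with coefficients in the `q`-exterior algebra. -/
structure IsSkewFamily (ρ : ι → R) : Prop where
  mul_self (a : ι) : ρ a * ρ a = 0
  exists_mul_eq_smul_mul (a b : ι) : ∃ c : k, ρ a * ρ b = c • (ρ b * ρ a)

namespace IsSkewFamily

variable {ρ : ι → R} (h : IsSkewFamily k ρ)
include h

lemma comp {κ : Type*} (f : κ → ι) : IsSkewFamily k (ρ ∘ f) :=
  ⟨fun a => h.mul_self (f a), fun a b => h.exists_mul_eq_smul_mul (f a) (f b)⟩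

lemma exists_prod_eq_smul_prod_of_perm {P Q : List ι} (hPQ : P.Perm Q) :
    ∃ c : k, (P.map ρ).prod = c • (Q.map ρ).prod := by
  induction hPQ with
  | nil => exact ⟨1, by simp⟩
  | cons a _ ih =>
    obtain ⟨c, hc⟩ := ih
    exact ⟨c, by simp [hc]⟩
  | swap a b P =>
    obtain ⟨c, hc⟩ := h.exists_mul_eq_smul_mul b a
    exact ⟨c, by simp only [List.map_cons, List.prod_cons, ← mul_assoc, hc, smul_mul_assoc]⟩
  | trans _ _ ih₁ ih₂ =>
    obtain ⟨c, hc⟩ := ih₁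
    obtain ⟨d, hd⟩ := ih₂
    exact ⟨c * d, by rw [hc, hd, smul_smul]⟩

variable [LinearOrder ι]

lemma exists_mul_orderedProd_eq_smul {a : ι} {I : Finset ι} (ha : a ∉ I) :
    ∃ c : k, ρ a * orderedProd ρ I = c • orderedProd ρ (insert a I) := by
  have hperm : (a :: I.sort).Perm (insert a I).sort := by
    rw [← Multiset.coe_eq_coe, ← Multiset.cons_coe, Finset.sort_eq, Finset.sort_eq,
      Finset.insert_val_of_notMem ha]
  simpa [orderedProd] using h.exists_prod_eq_smul_prod_of_perm hperm

lemma mul_orderedProd_eq_zero {a : ι} {I : Finset ι} (ha : a ∈ I) :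
    ρ a * orderedProd ρ I = 0 := by
  have hperm : I.sort.Perm (a :: (I.erase a).sort) := by
    rw [← Multiset.coe_eq_coe, ← Multiset.cons_coe, Finset.sort_eq, Finset.sort_eq,
      Finset.erase_val, Multiset.cons_erase ha]
  obtain ⟨c, hc⟩ := h.exists_prod_eq_smul_prod_of_perm hperm
  rw [orderedProd, hc, List.map_cons, List.prod_cons, mul_smul_comm, ← mul_assoc, h.mul_self,
    zero_mul, smul_zero]

lemma span_range_pow_le (s : ℕ) :
    Submodule.span k (Set.range ρ) ^ s ≤
      Submodule.span k {x | ∃ I : Finset ι, I.card = s ∧ x = orderedProd ρ I} := by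
  induction s with
  | zero =>
    rw [pow_zero, Submodule.one_eq_span, Submodule.span_singleton_le_iff_mem]
    exact Submodule.subset_span ⟨∅, rfl, (orderedProd_empty ρ).symm⟩
  | succ s ih =>
    rw [pow_succ']
    refine (mul_le_mul' le_rfl ih).trans ?_
    rw [Submodule.span_mul_span, Submodule.span_le]
    rintro _ ⟨_, ⟨a, rfl⟩, _, ⟨I, hI, rfl⟩, rfl⟩
    by_cases ha : a ∈ I
    · simp [h.mul_orderedProd_eq_zero ha]
    · obtain ⟨c, hc⟩ := h.exists_mul_orderedProd_eq_smul ha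
      change ρ a * orderedProd ρ I ∈ _
      rw [hc]
      exact Submodule.smul_mem _ c <| Submodule.subset_span
        ⟨insert a I, by rw [Finset.card_insert_of_notMem ha, hI], rfl⟩

end IsSkewFamily

end SkewFamily

section LeadSpan

variable {k ι R : Type*} [CommSemiring k] [Semiring R] [Algebra k R]

variable (k) in
/-- The span of the products `z * ρ a₁ * ⋯ * ρ aⱼ`. For `z` the first row of a matrix and `ρ` the
other rows, it is spanned by the minors of size `j + 1` involving the first row. -/
def leadSpan (z : R) (ρ : ι → R) (j : ℕ) : Submodule k R :=
  Submodule.span k {z} * Submodule.span k (Set.range ρ) ^ j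

lemma mem_leadSpan_zero (z : R) (ρ : ι → R) : z ∈ leadSpan k z ρ 0 := by
  simp [leadSpan, Submodule.mem_span_singleton_self]

variable {z x : R} {ρ : ι → R} {j : ℕ}

lemma mul_mem_leadSpan_succ (hx : x ∈ leadSpan k z ρ j) (a : ι) :
    x * ρ a ∈ leadSpan k z ρ (j + 1) := by
  rw [leadSpan, pow_succ, ← mul_assoc]
  exact Submodule.mul_mem_mul hx (Submodule.subset_span ⟨a, rfl⟩)

lemma span_range_mul_span_lead_le (hρz : ∀ a, ∃ c : k, ρ a * z = c • (z * ρ a)) :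
    Submodule.span k (Set.range ρ) * Submodule.span k {z} ≤
      Submodule.span k {z} * Submodule.span k (Set.range ρ) := by
  rw [Submodule.span_mul_span, Submodule.span_le]
  rintro _ ⟨_, ⟨a, rfl⟩, _, rfl, rfl⟩
  obtain ⟨c, hc⟩ := hρz a
  simp only [hc]
  exact Submodule.smul_mem _ c <| Submodule.mul_mem_mul
    (Submodule.mem_span_singleton_self _) (Submodule.subset_span ⟨a, rfl⟩)

lemma row_mul_mem_leadSpan_succ (hρz : ∀ a, ∃ c : k, ρ a * z = c • (z * ρ a))
    (hx : x ∈ leadSpan k z ρ j) (a : ι) : ρ a * x ∈ leadSpan k z ρ (j + 1) := by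
  rw [leadSpan, pow_succ', ← mul_assoc]
  refine mul_le_mul' (span_range_mul_span_lead_le hρz) le_rfl ?_
  rw [mul_assoc]
  exact Submodule.mul_mem_mul (Submodule.subset_span ⟨a, rfl⟩) hx

lemma leadSpan_mul_span_lead (hz : z * z = 0) (hρz : ∀ a, ∃ c : k, ρ a * z = c • (z * ρ a))
    (j : ℕ) : leadSpan k z ρ j * Submodule.span k {z} = ⊥ := by
  induction j with
  | zero => simp [leadSpan, Submodule.span_mul_span, hz]
  | succ j ih =>
    rw [eq_bot_iff]
    calc leadSpan k z ρ (j + 1) * Submodule.span k {z}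
        = leadSpan k z ρ j * (Submodule.span k (Set.range ρ) * Submodule.span k {z}) := by
          simp only [leadSpan, pow_succ, mul_assoc]
      _ ≤ leadSpan k z ρ j * (Submodule.span k {z} * Submodule.span k (Set.range ρ)) :=
          mul_le_mul' le_rfl (span_range_mul_span_lead_le hρz)
      _ = ⊥ := by rw [← mul_assoc, ih, Submodule.bot_mul]

end LeadSpan

section RowReduction

variable {k ι R : Type*} [CommRing k] [Ring R] [Algebra k R] [LinearOrder ι]

variable (k) in
/-- The rows `ρ' a = ρ a - z * c a` arise from the rows `ρ a` by subtracting multiples of a leading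
row `z`, as in Gaussian elimination with a pivot in the row `z`. -/
structure IsRowReduction (z : R) (ρ ρ' c : ι → R) : Prop where
  mul_self : z * z = 0
  exists_mul_lead (a : ι) : ∃ r : k, ρ a * z = r • (z * ρ a)
  eq_sub (a : ι) : ρ' a = ρ a - z * c a
  exists_coeff_mul {a b : ι} (hab : a < b) : ∃ r : k, c a * ρ' b = ρ' b * c a + r • (ρ' a * c b)

namespace IsRowReduction

variable {z x : R} {ρ ρ' c : ι → R} {j s : ℕ} (h : IsRowReduction k z ρ ρ' c)
include h

lemma mul_reduced (hx : x ∈ leadSpan k z ρ j) (a : ι) : x * ρ' a = x * ρ a := by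
  have hxz : x * z ∈ leadSpan k z ρ j * Submodule.span k {z} :=
    Submodule.mul_mem_mul hx (Submodule.mem_span_singleton_self z)
  rw [leadSpan_mul_span_lead h.mul_self h.exists_mul_lead, Submodule.mem_bot] at hxz
  rw [h.eq_sub, mul_sub, ← mul_assoc, hxz, zero_mul, sub_zero]

lemma mul_orderedProd_reduced (hx : x ∈ leadSpan k z ρ j) (I : Finset ι) :
    x * orderedProd ρ' I = x * orderedProd ρ I := by
  induction I using Finset.induction_on_min generalizing x j with
  | empty => simp
  | insert a I ha ih =>
    rw [orderedProd_insert _ ha, orderedProd_insert _ ha, ← mul_assoc, ← mul_assoc,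
      h.mul_reduced hx, ih (mul_mem_leadSpan_succ hx a)]

-- Moving `c a` to the right past `ρ' b` creates only a term with `c b` in place of `c a`.
lemma mul_coeff_mul_orderedProd_mem {a : ι} {I : Finset ι} (ha : ∀ b ∈ I, a < b)
    (hx : x ∈ leadSpan k z ρ j) :
    x * c a * orderedProd ρ' I ∈ leadSpan k z ρ (j + I.card) * Submodule.span k (Set.range c) := by
  induction I using Finset.induction_on_min generalizing x j a with
  | empty =>
    simpa using Submodule.mul_mem_mul hx (Submodule.subset_span (R := k) (Set.mem_range_self a))
  | insert b I hb ih =>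
    obtain ⟨r, hr⟩ := h.exists_coeff_mul (ha b (Finset.mem_insert_self b I))
    have expand : x * c a * orderedProd ρ' (insert b I) =
        x * ρ b * c a * orderedProd ρ' I + r • (x * ρ a * c b * orderedProd ρ' I) := by
      rw [orderedProd_insert _ hb, ← h.mul_reduced hx, ← h.mul_reduced hx, ← mul_assoc,
        mul_assoc x (c a), hr]
      simp only [mul_add, add_mul, mul_smul_comm, smul_mul_assoc, mul_assoc]
    rw [expand, Finset.card_insert_of_notMem fun hbI => (hb b hbI).false, add_comm I.card,
      ← add_assoc]
    exact add_mem
      (ih (fun i hi => ha i (Finset.mem_insert_of_mem hi)) (mul_mem_leadSpan_succ hx b))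
      (Submodule.smul_mem _ r (ih hb (mul_mem_leadSpan_succ hx a)))

lemma orderedProd_sub_orderedProd_reduced_mem {I : Finset ι} (hI : I.card = s + 1) :
    orderedProd ρ I - orderedProd ρ' I ∈ leadSpan k z ρ s * Submodule.span k (Set.range c) := by
  induction I using Finset.induction_on_min generalizing s with
  | empty => simp at hI
  | insert a I ha ih =>
    rw [Finset.card_insert_of_notMem fun haI => (ha a haI).false, Nat.add_right_cancel_iff] at hI
    subst hI
    have expand : orderedProd ρ (insert a I) - orderedProd ρ' (insert a I) =
        ρ a * (orderedProd ρ I - orderedProd ρ' I) + z * c a * orderedProd ρ' I := by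
      rw [orderedProd_insert _ ha, orderedProd_insert _ ha, h.eq_sub]
      noncomm_ring
    rw [expand]
    refine add_mem ?_ (by simpa using h.mul_coeff_mul_orderedProd_mem ha (mem_leadSpan_zero z ρ))
    rcases hn : I.card with _ | t
    · simp [Finset.card_eq_zero.1 hn]
    · refine Submodule.mul_induction_on (ih hn) (fun x hx y hy => ?_) fun x y hx hy => ?_
      · rw [← mul_assoc]
        exact Submodule.mul_mem_mul (row_mul_mem_leadSpan_succ h.exists_mul_lead hx a) hy
      · rw [mul_add]
        exact add_mem hx hy

lemma leadSpan_le (hρ : IsSkewFamily k ρ) {W : Submodule k R} (hzW : ∀ w ∈ W, z * w ∈ W)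
    (hW : ∀ I : Finset ι, I.card = s → orderedProd ρ' I ∈ W) : leadSpan k z ρ s ≤ W := by
  refine (mul_le_mul' le_rfl (hρ.span_range_pow_le s)).trans ?_
  rw [Submodule.span_mul_span, Submodule.span_le]
  rintro _ ⟨_, rfl, _, ⟨I, hI, rfl⟩, rfl⟩
  change _ * orderedProd ρ I ∈ W
  rw [← h.mul_orderedProd_reduced (mem_leadSpan_zero _ ρ)]
  exact hzW _ (hW I hI)

lemma orderedProd_mem (hρ : IsSkewFamily k ρ) {W : Submodule k R} (hzW : ∀ w ∈ W, z * w ∈ W)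
    (hρW : ∀ a, ∀ w ∈ W, ρ' a * w ∈ W) (hcW : ∀ a, ∀ w ∈ W, w * c a ∈ W)
    (hW : ∀ I : Finset ι, I.card = s → orderedProd ρ' I ∈ W) {I : Finset ι}
    (hI : I.card = s + 1) : orderedProd ρ I ∈ W := by
  have hWc : W * Submodule.span k (Set.range c) ≤ W := by
    rw [← Submodule.span_eq W, Submodule.span_mul_span, Submodule.span_eq, Submodule.span_le]
    rintro _ ⟨w, hw, _, ⟨a, rfl⟩, rfl⟩
    exact hcW a w hw
  have hsub : orderedProd ρ I - orderedProd ρ' I ∈ W :=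
    hWc <| mul_le_mul' (h.leadSpan_le hρ hzW hW) le_rfl
      (h.orderedProd_sub_orderedProd_reduced_mem hI)
  have hred : orderedProd ρ' I ∈ W := by
    obtain ⟨a, I₀, ha, rfl, hI₀⟩ := exists_eq_insert_min_of_card_eq_succ hI
    rw [orderedProd_insert _ ha]
    exact hρW a _ (hW I₀ hI₀)
  simpa using W.add_mem hsub hred

end IsRowReduction

end RowReduction

section Exterior

variable {k B ι : Type*} [CommRing k] [Ring B] [Algebra k B]

/-- The free right `B`-module `B ⊗ Λ_q(ι)` over the `q`-exterior algebra, with coordinates in the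
basis `e_J = e_{j₁} ⋯ e_{jₛ}`, where `J = {j₁ < ⋯ < jₛ}`. -/
abbrev ExtModule (B ι : Type*) := Finset ι → B

variable (ι) in
/-- Left multiplication by scalars on `B ⊗ Λ_q(ι)`. -/
def leftMul (k : Type*) {B : Type*} [CommRing k] [Ring B] [Algebra k B] :
    B →ₐ[k] Module.End Bᵐᵒᵖ (ExtModule B ι) :=
  Algebra.lsmul k Bᵐᵒᵖ (ExtModule B ι)

@[simp]
lemma leftMul_apply (b : B) (v : ExtModule B ι) (J : Finset ι) : leftMul ι k b v J = b * v J :=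
  rfl

variable [LinearOrder ι]

/-- Left multiplication by the generator `e_j` of `Λ_q(ι)`, subject to the relations `e_j² = 0`
and `e_l e_j = -q e_j e_l` for `j < l`. -/
def wedge (B : Type*) [Ring B] [Algebra k B] (q : k) (j : ι) :
    Module.End Bᵐᵒᵖ (ExtModule B ι) where
  toFun v J := if j ∈ J then (-q) ^ (J.filter (· < j)).card • v (J.erase j) else 0
  map_add' v w := by ext J; simp [ite_add_zero]
  map_smul' b v := by ext J; simp [smul_comm]

lemma wedge_apply (q : k) (j : ι) (v : ExtModule B ι) (J : Finset ι) :
    wedge B q j v J = if j ∈ J then (-q) ^ (J.filter (· < j)).card • v (J.erase j) else 0 :=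
  rfl

lemma wedge_mul_leftMul (q : k) (j : ι) (b : B) :
    wedge B q j * leftMul ι k b = leftMul ι k b * wedge B q j := by
  ext v J
  simp [wedge_apply]

lemma wedge_mul_self (q : k) (j : ι) : wedge B q j * wedge B q j = 0 := by
  ext v J
  simp [wedge_apply]

lemma wedge_mul_wedge_of_lt (q : k) {j l : ι} (h : j < l) :
    wedge B q l * wedge B q j = (-q) • (wedge B q j * wedge B q l) := by
  ext v J
  by_cases hj : j ∈ J
  swap; · simp [wedge_apply, hj]
  have below_j : (J.erase l).filter (· < j) = J.filter (· < j) := by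
    rw [Finset.filter_erase, Finset.erase_eq_of_notMem (by simp [h.le])]
  have below_l : ((J.erase j).filter (· < l)).card + 1 = (J.filter (· < l)).card := by
    rw [Finset.filter_erase, Finset.card_erase_add_one (by simp [hj, h])]
  simp only [Module.End.mul_apply, LinearMap.smul_apply, Pi.smul_apply, wedge_apply,
    Finset.mem_erase, ne_eq, h.ne, h.ne', not_false_eq_true, true_and, hj, if_true, smul_ite,
    smul_zero, below_j, ← below_l, Finset.erase_right_comm (a := l), smul_smul]
  congr 2
  ring

variable [Fintype ι]

/-- Left multiplication by the row vector `∑ j, x j e_j` on `B ⊗ Λ_q(ι)`. -/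
def rowOp (q : k) : (ι → B) →ₗ[k] Module.End Bᵐᵒᵖ (ExtModule B ι) :=
  ∑ j, (LinearMap.mulRight k (wedge B q j)).comp
    ((leftMul ι k).toLinearMap.comp (LinearMap.proj j))

lemma rowOp_eq_sum (q : k) (x : ι → B) : rowOp q x = ∑ j, leftMul ι k (x j) * wedge B q j := by
  simp [rowOp]

lemma rowOp_apply (q : k) (x : ι → B) (v : ExtModule B ι) (J : Finset ι) :
    rowOp q x v J =
      ∑ j ∈ J, (-q) ^ (J.filter (· < j)).card • (x j * v (J.erase j)) := by
  simp [rowOp_eq_sum, LinearMap.sum_apply, wedge_apply, Finset.sum_ite_mem]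

lemma leftMul_mul_rowOp (q : k) (b : B) (x : ι → B) :
    leftMul ι k b * rowOp q x = rowOp q fun j => b * x j := by
  simp [rowOp_eq_sum, Finset.mul_sum, mul_assoc]

lemma rowOp_mul_leftMul (q : k) (x : ι → B) (b : B) :
    rowOp q x * leftMul ι k b = rowOp q fun j => x j * b := by
  simp [rowOp_eq_sum, Finset.sum_mul, mul_assoc, wedge_mul_leftMul]

section Products

variable [LocallyFiniteOrderTop ι] [LocallyFiniteOrderBot ι]

lemma rowOp_mul_rowOp (q : k) (x y : ι → B) :
    rowOp q x * rowOp q y = ∑ j, ∑ l ∈ Finset.Ioi j,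
      leftMul ι k (x j * y l - q • (x l * y j)) * (wedge B q j * wedge B q l) := by
  have expand : rowOp q x * rowOp q y =
      ∑ l, ∑ j, leftMul ι k (x j * y l) * (wedge B q j * wedge B q l) := by
    rw [rowOp_eq_sum, rowOp_eq_sum, Finset.sum_mul_sum, Finset.sum_comm]
    refine Finset.sum_congr rfl fun l _ => Finset.sum_congr rfl fun j _ => ?_
    rw [mul_assoc, ← mul_assoc (wedge B q j), wedge_mul_leftMul, map_mul]
    simp only [mul_assoc]
  have diagonal (l : ι) : ∑ j, leftMul ι k (x j * y l) * (wedge B q j * wedge B q l) =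
      ∑ j ∈ {l}ᶜ, leftMul ι k (x j * y l) * (wedge B q j * wedge B q l) := by
    rw [Fintype.sum_eq_add_sum_compl l, wedge_mul_self, mul_zero, zero_add]
  simp only [expand, diagonal]
  rw [← Finset.sum_sum_Ioi_add_eq_sum_sum_off_diag]
  refine Finset.sum_congr rfl fun j _ => Finset.sum_congr rfl fun l hl => ?_
  rw [wedge_mul_wedge_of_lt q (Finset.mem_Ioi.1 hl), map_sub, map_smul, sub_mul, mul_smul_comm,
    smul_mul_assoc]
  module

lemma rowOp_mul_self (q : k) {x : ι → B} (h : ∀ j l, j < l → x j * x l = q • (x l * x j)) :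
    rowOp q x * rowOp q x = 0 := by
  rw [rowOp_mul_rowOp]
  refine Finset.sum_eq_zero fun j _ => Finset.sum_eq_zero fun l hl => ?_
  rw [h j l (Finset.mem_Ioi.1 hl), sub_self, map_zero, zero_mul]

lemma rowOp_mul_rowOp_comm (q : k) {x y : ι → B} (h : ∀ j l, j < l →
      y j * x l - q • (y l * x j) = (-q) • (x j * y l - q • (x l * y j))) :
    rowOp q y * rowOp q x = (-q) • (rowOp q x * rowOp q y) := by
  simp only [rowOp_mul_rowOp, Finset.smul_sum]
  refine Finset.sum_congr rfl fun j _ => Finset.sum_congr rfl fun l hl => ?_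
  rw [h j l (Finset.mem_Ioi.1 hl), map_smul, smul_mul_assoc]

end Products

/-- The element `1 ∈ B ⊗ Λ_q(ι)`. -/
def vacuum (B ι : Type*) [Ring B] [DecidableEq ι] : ExtModule B ι :=
  Pi.single ∅ 1

end Exterior

section Determinant

variable {k B : Type*} [Field k] [Ring B] [Algebra k B] {t : ℕ}

lemma invCount_eq_sum (σ : Equiv.Perm (Fin t)) :
    invCount σ = ∑ a, ∑ b, if a < b ∧ σ b < σ a then 1 else 0 := by
  rw [invCount, Finset.card_filter, Fintype.sum_prod_type]

/-- The permutation sending `0` to `p` and inducing `τ` between the complements of `0` and `p`. -/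
def consPerm (p : Fin (t + 1)) (τ : Equiv.Perm (Fin t)) : Equiv.Perm (Fin (t + 1)) :=
  Equiv.Perm.decomposeFin.symm (0, τ) |>.trans p.cycleRange.symm

@[simp]
lemma consPerm_zero (p : Fin (t + 1)) (τ : Equiv.Perm (Fin t)) : consPerm p τ 0 = p := by
  simp [consPerm, Fin.cycleRange_symm_zero]

@[simp]
lemma consPerm_succ (p : Fin (t + 1)) (τ : Equiv.Perm (Fin t)) (i : Fin t) :
    consPerm p τ i.succ = p.succAbove (τ i) := by
  simp [consPerm, Fin.cycleRange_symm_succ]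

lemma consPerm_bijective :
    Function.Bijective fun x : Fin (t + 1) × Equiv.Perm (Fin t) => consPerm x.1 x.2 := by
  rw [Fintype.bijective_iff_injective_and_card]
  refine ⟨fun ⟨p, τ⟩ ⟨p', τ'⟩ h => ?_, by simp [Fintype.card_perm, Nat.factorial_succ]⟩
  obtain rfl : p = p' := by simpa using DFunLike.congr_fun h 0
  exact congrArg (Prod.mk p) (Equiv.ext fun i => by simpa using DFunLike.congr_fun h i.succ)

lemma card_succAbove_lt (p : Fin (t + 1)) :
    (Finset.univ.filter fun i : Fin t => p.succAbove i < p).card = p := by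
  simp only [Fin.succAbove_lt_iff_castSucc_lt]
  exact Fin.card_filter_val_lt.trans (min_eq_right (Nat.le_of_lt_succ p.isLt))

lemma invCount_consPerm (p : Fin (t + 1)) (τ : Equiv.Perm (Fin t)) :
    invCount (consPerm p τ) = p + invCount τ := by
  have first_row : ∑ i, (if p.succAbove (τ i) < p then 1 else 0) = (p : ℕ) := by
    rw [Equiv.sum_comp τ fun i => if p.succAbove i < p then 1 else 0, ← Finset.card_filter,
      card_succAbove_lt]
  simp only [invCount_eq_sum, Fin.sum_univ_succ, consPerm_zero, consPerm_succ, first_row,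
    Fin.succAbove_lt_succAbove_iff, Fin.succ_lt_succ_iff, Fin.succ_pos, true_and,
    Fin.not_lt_zero, false_and, if_false, zero_add]

lemma qdet_succ (q : k) (M : Fin (t + 1) → Fin (t + 1) → B) :
    qdet q M = ∑ p : Fin (t + 1),
      (-q) ^ (p : ℕ) • (M 0 p * qdet q fun a b => M a.succ (p.succAbove b)) := by
  rw [qdet, ← consPerm_bijective.sum_comp, Fintype.sum_prod_type]
  refine Finset.sum_congr rfl fun p _ => ?_
  rw [qdet, Finset.mul_sum, Finset.smul_sum]
  refine Finset.sum_congr rfl fun τ _ => ?_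
  simp [invCount_consPerm, List.ofFn_succ, smul_smul, pow_add]

lemma qdet_eq_zero_of_col_eq_zero (q : k) {M : Fin t → Fin t → B} {b : Fin t}
    (h : ∀ a, M a b = 0) : qdet q M = 0 := by
  refine Finset.sum_eq_zero fun σ _ => ?_
  rw [List.prod_eq_zero (List.mem_ofFn.2 ⟨σ.symm b, by simp [h]⟩), smul_zero]

end Determinant

section OrderEmb

variable {α β : Type*} [LinearOrder α] [LinearOrder β] {t : ℕ}

lemma card_filter_lt_orderEmbOfFin {J : Finset α} (hJ : J.card = t) (p : Fin t) :
    (J.filter (· < J.orderEmbOfFin hJ p)).card = p := by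
  have hmap : Finset.univ.map (J.orderEmbOfFin hJ).toEmbedding = J := J.map_orderEmbOfFin_univ hJ
  generalize J.orderEmbOfFin hJ = e at hmap
  subst hmap
  simp [Finset.filter_map, Finset.filter_gt_eq_Iio]

lemma orderEmbOfFin_erase_orderEmbOfFin {J : Finset α} (hJ : J.card = t + 1) (p : Fin (t + 1))
    (hJp : (J.erase (J.orderEmbOfFin hJ p)).card = t) (b : Fin t) :
    (J.erase (J.orderEmbOfFin hJ p)).orderEmbOfFin hJp b =
      J.orderEmbOfFin hJ (p.succAbove b) := by
  refine (DFunLike.congr_fun (Finset.orderEmbOfFin_unique' hJp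
    (f := p.succAboveOrderEmb.trans (J.orderEmbOfFin hJ)) fun b => ?_) b).symm
  simp [Fin.succAbove_ne]

lemma orderEmbOfFin_map (f : α ↪o β) {I : Finset α}
    (hI : I.card = t) (hfI : (I.map f.toEmbedding).card = t) (a : Fin t) :
    (I.map f.toEmbedding).orderEmbOfFin hfI a = f (I.orderEmbOfFin hI a) := by
  refine (DFunLike.congr_fun
    (Finset.orderEmbOfFin_unique' (f := (I.orderEmbOfFin hI).trans f) hfI fun a => ?_) a).symm
  simp

end OrderEmb

section RowProduct

variable {k B ι : Type*} [Field k] [Ring B] [Algebra k B] [LinearOrder ι] [Fintype ι] {t : ℕ}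

lemma prod_rowOp_vacuum_of_card_ne (q : k) (x : Fin t → ι → B) {J : Finset ι} (hJ : J.card ≠ t) :
    (List.ofFn fun a => rowOp q (x a)).prod (vacuum B ι) J = 0 := by
  induction t generalizing J with
  | zero =>
    have hne : J ≠ ∅ := by rintro rfl; simp at hJ
    simp [vacuum, hne]
  | succ t ih =>
    rw [List.ofFn_succ, List.prod_cons, Module.End.mul_apply, rowOp_apply]
    refine Finset.sum_eq_zero fun j hj => ?_
    rw [ih _ (by have := Finset.card_erase_add_one hj; omega), mul_zero, smul_zero]

lemma prod_rowOp_vacuum (q : k) (x : Fin t → ι → B) {J : Finset ι} (hJ : J.card = t) :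
    (List.ofFn fun a => rowOp q (x a)).prod (vacuum B ι) J =
      qdet q fun a b => x a (J.orderEmbOfFin hJ b) := by
  induction t generalizing J with
  | zero =>
    obtain rfl := Finset.card_eq_zero.1 hJ
    simp [vacuum, qdet, invCount]
  | succ t ih =>
    rw [List.ofFn_succ, List.prod_cons, Module.End.mul_apply, rowOp_apply, qdet_succ,
      ← Finset.sum_coe_sort, ← (J.orderIsoOfFin hJ).toEquiv.sum_comp]
    refine Finset.sum_congr rfl fun p _ => ?_
    have hJp : (J.erase (J.orderEmbOfFin hJ p)).card = t := by
      rw [Finset.card_erase_of_mem (J.orderEmbOfFin_mem hJ p), hJ, Nat.add_sub_cancel]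
    change (-q) ^ (J.filter (· < J.orderEmbOfFin hJ p)).card •
      (x 0 (J.orderEmbOfFin hJ p) * _) = _
    rw [card_filter_lt_orderEmbOfFin]
    have minor_erase := ih (fun a => x a.succ) hJp
    simp only [orderEmbOfFin_erase_orderEmbOfFin] at minor_erase
    rw [← minor_erase]
    rfl

end RowProduct

section Minors

variable {k B : Type*} [Field k] [Ring B] [Algebra k B] {m n s : ℕ} (q : k)
  (X : Fin m → Fin n → B)

lemma orderedProd_rowOp_vacuum {I : Finset (Fin m)} {J : Finset (Fin n)} (hI : I.card = s)
    (hJ : J.card = s) :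
    orderedProd (fun i => rowOp q (X i)) I (vacuum B (Fin n)) J = qminor q X I J hI hJ := by
  rw [orderedProd_eq_prod_ofFn _ hI]
  exact prod_rowOp_vacuum q (fun a => X (I.orderEmbOfFin hI a)) hJ

lemma orderedProd_rowOp_vacuum_of_card_ne {I : Finset (Fin m)} {J : Finset (Fin n)}
    (hIJ : J.card ≠ I.card) :
    orderedProd (fun i => rowOp q (X i)) I (vacuum B (Fin n)) J = 0 := by
  rw [orderedProd_eq_prod_ofFn _ rfl]
  exact prod_rowOp_vacuum_of_card_ne q (fun a => X (I.orderEmbOfFin rfl a)) hIJ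

lemma qminor_map_cols {n' : ℕ} (g : Fin n' ↪o Fin n) {I : Finset (Fin m)} {J : Finset (Fin n')}
    (hI : I.card = s) (hJ : J.card = s) (hgJ : (J.map g.toEmbedding).card = s) :
    qminor q X I (J.map g.toEmbedding) hI hgJ = qminor q (fun i j => X i (g j)) I J hI hJ := by
  simp only [qminor, Finset.coe_orderIsoOfFin_apply, orderEmbOfFin_map g hJ]

lemma qminor_eq_zero_of_col_eq_zero {I : Finset (Fin m)} {J : Finset (Fin n)} (hI : I.card = s)
    (hJ : J.card = s) {l : Fin n} (hl : l ∈ J) (h : ∀ i, X i l = 0) :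
    qminor q X I J hI hJ = 0 := by
  refine qdet_eq_zero_of_col_eq_zero q (b := (J.orderIsoOfFin hJ).symm ⟨l, hl⟩) fun a => ?_
  simp [h]

end Minors

section RowOps

variable {k B : Type*} [Field k] [Ring B] [Algebra k B] {m n : ℕ} {q : k} {X : Fin m → Fin n → B}

lemma rowOp_mul_rowOp_of_lt (hq : q ≠ 0) (hX : IsQMat q X) {a b : Fin m} (hab : a < b) :
    rowOp q (X b) * rowOp q (X a) = (-q) • (rowOp q (X a) * rowOp q (X b)) := by
  refine rowOp_mul_rowOp_comm q fun j l hjl => ?_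
  obtain ⟨-, -, anti, diag⟩ := hX
  rw [sub_eq_iff_eq_add.1 (diag a b j l hab hjl), ← anti a b j l hab hjl]
  match_scalars <;> field_simp
  ring

lemma isSkewFamily_rowOp (hq : q ≠ 0) (hX : IsQMat q X) :
    IsSkewFamily k fun i => rowOp q (X i) where
  mul_self a := rowOp_mul_self q (hX.1 a)
  exists_mul_eq_smul_mul a b := by
    rcases lt_trichotomy a b with hab | rfl | hba
    · refine ⟨(-q)⁻¹, ?_⟩
      rw [rowOp_mul_rowOp_of_lt hq hX hab, inv_smul_smul₀ (neg_ne_zero.2 hq)]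
    · exact ⟨1, (one_smul k _).symm⟩
    · exact ⟨-q, rowOp_mul_rowOp_of_lt hq hX hba⟩

end RowOps

section CoeffSubmodule

variable {k B ι : Type*} [CommRing k] [Ring B] [Algebra k B] [LinearOrder ι]

variable (k ι) in
/-- The operators on `B ⊗ Λ_q(ι)` sending the vacuum to a vector with coordinates in `K`. -/
def coeffSubmodule (K : TwoSidedIdeal B) : Submodule k (Module.End Bᵐᵒᵖ (ExtModule B ι)) where
  carrier := {f | ∀ J, f (vacuum B ι) J ∈ K}
  add_mem' hf hg J := K.add_mem (hf J) (hg J)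
  zero_mem' _ := K.zero_mem
  smul_mem' c f hf J := by
    rw [LinearMap.smul_apply, Pi.smul_apply, Algebra.smul_def]
    exact K.mul_mem_left _ _ (hf J)

variable {K : TwoSidedIdeal B} {f : Module.End Bᵐᵒᵖ (ExtModule B ι)}

lemma rowOp_mul_mem_coeffSubmodule [Fintype ι] (q : k) (x : ι → B)
    (hf : f ∈ coeffSubmodule k ι K) : rowOp q x * f ∈ coeffSubmodule k ι K := by
  intro J
  rw [Module.End.mul_apply, rowOp_apply]
  refine sum_mem fun j _ => ?_
  rw [← smul_mul_assoc]
  exact K.mul_mem_left _ _ (hf _)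

lemma mul_leftMul_mem_coeffSubmodule (b : B) (hf : f ∈ coeffSubmodule k ι K) :
    f * leftMul ι k b ∈ coeffSubmodule k ι K := by
  have leftMul_vacuum : leftMul ι k b (vacuum B ι) = MulOpposite.op b • vacuum B ι := by
    ext J
    by_cases hJ : J = ∅ <;> simp [vacuum, hJ]
  intro J
  rw [Module.End.mul_apply, leftMul_vacuum, map_smul]
  exact K.mul_mem_right _ _ (hf J)

end CoeffSubmodule

section MinorIdeal

variable {k B : Type*} [Field k] [Ring B] [Algebra k B] {m n t : ℕ}

/-- The two-sided ideal generated by the `t × t` quantum minors of `X`. -/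
def minorIdeal (q : k) (X : Fin m → Fin n → B) (t : ℕ) : TwoSidedIdeal B :=
  TwoSidedIdeal.span {x : B | ∃ (I : Finset (Fin m)) (J : Finset (Fin n)) (hI : I.card = t)
    (hJ : J.card = t), x = qminor q X I J hI hJ}

variable {q : k} {X : Fin m → Fin n → B}

lemma qminor_mem_minorIdeal {I : Finset (Fin m)} {J : Finset (Fin n)} (hI : I.card = t)
    (hJ : J.card = t) : qminor q X I J hI hJ ∈ minorIdeal q X t :=
  TwoSidedIdeal.subset_span ⟨I, J, hI, hJ, rfl⟩

lemma minorIdeal_le {K : TwoSidedIdeal B} (h : ∀ (I : Finset (Fin m)) (J : Finset (Fin n))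
    (hI : I.card = t) (hJ : J.card = t), qminor q X I J hI hJ ∈ K) : minorIdeal q X t ≤ K := by
  rw [minorIdeal, TwoSidedIdeal.span_le]
  rintro _ ⟨I, J, hI, hJ, rfl⟩
  exact h I J hI hJ

end MinorIdeal

section Pivot

variable {k B : Type*} [Field k] [Ring B] [Algebra k B] {m n s : ℕ} {q : k}

/-- The entries `X'_{ij} = X_{ij} - q⁻¹ X_{1j} X_{in} X_{1n}⁻¹`, where `u` stands for `X_{1n}⁻¹`,
in the rows `i` of `X` other than the first. The last column, in which they vanish, is kept so that
the rows of `X` and of `X'` lie in the same module. -/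
def xPrime (q : k) (X : Fin (m + 1) → Fin (n + 1) → B) (u : B) (i : Fin m) (j : Fin (n + 1)) : B :=
  X i.succ j - q⁻¹ • (X 0 j * X i.succ (Fin.last n) * u)

lemma mul_inv_eq_smul {z u x : B} {c : k} (hzu : z * u = 1) (huz : u * z = 1)
    (h : z * x = c • (x * z)) : x * u = c • (u * x) := by
  calc x * u = u * (z * x) * u := by rw [← mul_assoc u, huz, one_mul]
    _ = c • (u * x * (z * u)) := by simp only [h, mul_assoc, mul_smul_comm, smul_mul_assoc]
    _ = c • (u * x) := by rw [hzu, mul_one]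

variable {X : Fin (m + 1) → Fin (n + 1) → B} {u : B}

lemma xPrime_last (hq : q ≠ 0) (hX : IsQMat q X) (hzu : X 0 (Fin.last n) * u = 1) (i : Fin m) :
    xPrime q X u i (Fin.last n) = 0 := by
  rw [xPrime, hX.2.1 0 i.succ _ i.succ_pos, smul_mul_assoc, inv_smul_smul₀ hq, mul_assoc, hzu,
    mul_one, sub_self]

lemma last_mul_inv (hX : IsQMat q X) (hzu : X 0 (Fin.last n) * u = 1)
    (huz : u * X 0 (Fin.last n) = 1) (i : Fin m) :
    X i.succ (Fin.last n) * u = q • (u * X i.succ (Fin.last n)) :=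
  mul_inv_eq_smul hzu huz (hX.2.1 0 i.succ _ i.succ_pos)

section

variable (hq : q ≠ 0) (hX : IsQMat q X) (hzu : X 0 (Fin.last n) * u = 1)
  (huz : u * X 0 (Fin.last n) = 1)
include hq hX hzu huz

lemma xPrime_eq (i : Fin m) (j : Fin (n + 1)) :
    xPrime q X u i j = X i.succ j - X 0 j * (u * X i.succ (Fin.last n)) := by
  rw [xPrime, mul_assoc, last_mul_inv hX hzu huz, mul_smul_comm, inv_smul_smul₀ hq]

lemma inv_mul_xPrime (i : Fin m) (j : Fin (n + 1)) :
    u * xPrime q X u i j = xPrime q X u i j * u := by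
  obtain rfl | hj := (Fin.le_last j).eq_or_lt
  · rw [xPrime_last hq hX hzu, mul_zero, zero_mul]
  have ⟨row, _, anti, _⟩ := hX
  have top : u * X 0 j = q • (X 0 j * u) := by
    rw [mul_inv_eq_smul hzu huz (c := q⁻¹) (by rw [row 0 j _ hj, inv_smul_smul₀ hq]),
      smul_inv_smul₀ hq]
  have entry : X i.succ j * u = u * X i.succ j := by
    simpa using mul_inv_eq_smul (c := (1 : k)) hzu huz
      (by simpa using anti 0 i.succ j _ i.succ_pos hj)
  rw [xPrime_eq hq hX hzu huz]
  simp only [mul_sub, sub_mul, entry, ← mul_assoc u (X 0 j), top, mul_assoc,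
    last_mul_inv hX hzu huz, mul_smul_comm, smul_mul_assoc]

lemma last_mul_xPrime {a b : Fin m} (hab : a < b) (j : Fin (n + 1)) :
    X a.succ (Fin.last n) * xPrime q X u b j = xPrime q X u b j * X a.succ (Fin.last n) +
      (q - q⁻¹) • (xPrime q X u a j * X b.succ (Fin.last n)) := by
  obtain rfl | hj := (Fin.le_last j).eq_or_lt
  · simp [xPrime_last hq hX hzu]
  have ⟨_, col, anti, diag⟩ := hX
  have cross : X a.succ (Fin.last n) * (X 0 j * (u * X b.succ (Fin.last n))) =
      q • (X 0 j * (u * (X a.succ (Fin.last n) * X b.succ (Fin.last n)))) -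
        (q - q⁻¹) • (X a.succ j * X b.succ (Fin.last n)) := by
    have move : X a.succ (Fin.last n) * X 0 j = X 0 j * X a.succ (Fin.last n) -
        (q - q⁻¹) • (X a.succ j * X 0 (Fin.last n)) := by
      rw [← anti 0 a.succ j _ a.succ_pos hj, ← diag 0 a.succ j _ a.succ_pos hj, sub_sub_cancel]
    rw [← mul_assoc, move, sub_mul, smul_mul_assoc, mul_assoc, mul_assoc (X a.succ j),
      ← mul_assoc (X 0 (Fin.last n)), hzu, one_mul, ← mul_assoc (X a.succ _),
      last_mul_inv hX hzu huz, smul_mul_assoc, mul_smul_comm, mul_assoc u]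
  have swap : X b.succ (Fin.last n) * X a.succ (Fin.last n) =
      q⁻¹ • (X a.succ (Fin.last n) * X b.succ (Fin.last n)) := by
    rw [col a.succ b.succ _ (Fin.succ_lt_succ_iff.2 hab), inv_smul_smul₀ hq]
  simp only [xPrime_eq hq hX hzu huz, mul_sub, sub_mul, cross, mul_assoc, swap, mul_smul_comm,
    anti a.succ b.succ j _ (Fin.succ_lt_succ_iff.2 hab) hj]
  module

lemma inv_mul_last_mul_xPrime {a b : Fin m} (hab : a < b) (j : Fin (n + 1)) :
    u * X a.succ (Fin.last n) * xPrime q X u b j =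
      xPrime q X u b j * (u * X a.succ (Fin.last n)) +
        (q - q⁻¹) • (xPrime q X u a j * (u * X b.succ (Fin.last n))) := by
  rw [mul_assoc, last_mul_xPrime hq hX hzu huz hab, mul_add, mul_smul_comm]
  simp only [← mul_assoc, inv_mul_xPrime hq hX hzu huz]

lemma isRowReduction_xPrime :
    IsRowReduction k (rowOp q (X 0)) (fun i => rowOp q (X (Fin.succ i)))
      (fun i => rowOp q (xPrime q X u i))
      (fun i => leftMul (Fin (n + 1)) k (u * X (Fin.succ i) (Fin.last n))) where
  mul_self := rowOp_mul_self q (hX.1 0)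
  exists_mul_lead a := (isSkewFamily_rowOp hq hX).exists_mul_eq_smul_mul a.succ 0
  eq_sub a := by
    rw [rowOp_mul_leftMul, ← map_sub]
    exact congrArg _ (funext (xPrime_eq hq hX hzu huz a))
  exists_coeff_mul {a b} hab := by
    refine ⟨q - q⁻¹, ?_⟩
    rw [leftMul_mul_rowOp, rowOp_mul_leftMul, rowOp_mul_leftMul, ← map_smul, ← map_add]
    exact congrArg _ (funext (inv_mul_last_mul_xPrime hq hX hzu huz hab))

end

lemma orderedProd_xPrime_vacuum {I : Finset (Fin m)} {J : Finset (Fin n)} (hI : I.card = s)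
    (hJ : J.card = s) :
    orderedProd (fun i => rowOp q (xPrime q X u i)) I (vacuum B (Fin (n + 1)))
        (J.map Fin.castSuccOrderEmb.toEmbedding) =
      qminor q (fun i j => xPrime q X u i j.castSucc) I J hI hJ := by
  rw [orderedProd_rowOp_vacuum q _ hI ((J.card_map _).trans hJ), qminor_map_cols _ _ _ _ hJ]
  rfl

lemma orderedProd_xPrime_vacuum_of_last_mem (hq : q ≠ 0) (hX : IsQMat q X)
    (hzu : X 0 (Fin.last n) * u = 1) {I : Finset (Fin m)} {J : Finset (Fin (n + 1))}
    (hJ : Fin.last n ∈ J) :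
    orderedProd (fun i => rowOp q (xPrime q X u i)) I (vacuum B (Fin (n + 1))) J = 0 := by
  by_cases hIJ : J.card = I.card
  · rw [orderedProd_rowOp_vacuum q _ rfl hIJ]
    exact qminor_eq_zero_of_col_eq_zero q _ _ _ hJ (xPrime_last hq hX hzu)
  · exact orderedProd_rowOp_vacuum_of_card_ne q _ hIJ

lemma lt_last_of_mem_map_castSucc {J : Finset (Fin n)} {j : Fin (n + 1)}
    (hj : j ∈ J.map Fin.castSuccOrderEmb.toEmbedding) : j < Fin.last n := by
  obtain ⟨i, -, rfl⟩ := Finset.mem_map.1 hj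
  exact Fin.castSucc_lt_last i

lemma last_notMem_map_castSucc (J : Finset (Fin n)) :
    Fin.last n ∉ J.map Fin.castSuccOrderEmb.toEmbedding :=
  fun h => (lt_last_of_mem_map_castSucc h).false

lemma exists_eq_map_castSucc {J : Finset (Fin (n + 1))} (hJ : Fin.last n ∉ J) :
    ∃ J' : Finset (Fin n), J = J'.map Fin.castSuccOrderEmb.toEmbedding := by
  have hsub : J ⊆ Finset.univ.map Fin.castSuccOrderEmb.toEmbedding := fun j hj => by
    obtain ⟨i, rfl⟩ := Fin.exists_castSucc_eq.2 (ne_of_mem_of_not_mem hj hJ)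
    exact Finset.mem_map_of_mem _ (Finset.mem_univ i)
  obtain ⟨J', -, h⟩ := Finset.subset_map_iff.1 hsub
  exact ⟨J', h⟩

lemma exists_eq_map_succ {I : Finset (Fin (m + 1))} (hI : 0 ∉ I) :
    ∃ I' : Finset (Fin m), I = I'.map (Fin.succOrderEmb m).toEmbedding := by
  have hsub : I ⊆ Finset.univ.map (Fin.succOrderEmb m).toEmbedding := fun i hi => by
    obtain ⟨i, rfl⟩ := Fin.exists_succ_eq.2 (ne_of_mem_of_not_mem hi hI)
    exact Finset.mem_map_of_mem _ (Finset.mem_univ i)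
  obtain ⟨I', -, h⟩ := Finset.subset_map_iff.1 hsub
  exact ⟨I', h⟩

lemma orderedProd_xPrime_mem_coeffSubmodule (hq : q ≠ 0) (hX : IsQMat q X)
    (hzu : X 0 (Fin.last n) * u = 1) {K : TwoSidedIdeal B}
    (hK : minorIdeal q (fun i (j : Fin n) => xPrime q X u i j.castSucc) s ≤ K)
    {I : Finset (Fin m)} (hI : I.card = s) :
    orderedProd (fun i => rowOp q (xPrime q X u i)) I ∈ coeffSubmodule k (Fin (n + 1)) K := by
  intro J
  by_cases hlast : Fin.last n ∈ J
  · rw [orderedProd_xPrime_vacuum_of_last_mem hq hX hzu hlast]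
    exact K.zero_mem
  by_cases hIJ : J.card = I.card
  · obtain ⟨J, rfl⟩ := exists_eq_map_castSucc hlast
    rw [orderedProd_xPrime_vacuum hI (by rwa [Finset.card_map, hI] at hIJ)]
    exact hK (qminor_mem_minorIdeal _ _)
  · rw [orderedProd_rowOp_vacuum_of_card_ne q _ hIJ]
    exact K.zero_mem

section

variable (hq : q ≠ 0) (hX : IsQMat q X) (hzu : X 0 (Fin.last n) * u = 1)
  (huz : u * X 0 (Fin.last n) = 1)
include hq hX hzu huz

lemma orderedProd_rowOp_insert_zero (I : Finset (Fin m)) :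
    orderedProd (fun i => rowOp q (X i)) (insert 0 (I.map (Fin.succOrderEmb m).toEmbedding)) =
      rowOp q (X 0) * orderedProd (fun i => rowOp q (xPrime q X u i)) I := by
  rw [orderedProd_insert _ (by simp [Fin.succ_pos]), orderedProd_map]
  exact ((isRowReduction_xPrime hq hX hzu huz).mul_orderedProd_reduced
    (mem_leadSpan_zero _ _) I).symm

lemma qminor_insert_zero_insert_last {I : Finset (Fin m)} {J : Finset (Fin n)} (hI : I.card = s)
    (hJ : J.card = s)
    (hI' : (insert 0 (I.map (Fin.succOrderEmb m).toEmbedding)).card = s + 1)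
    (hJ' : (insert (Fin.last n) (J.map Fin.castSuccOrderEmb.toEmbedding)).card = s + 1) :
    qminor q X (insert 0 (I.map (Fin.succOrderEmb m).toEmbedding))
        (insert (Fin.last n) (J.map Fin.castSuccOrderEmb.toEmbedding)) hI' hJ' =
      (-q) ^ s • (X 0 (Fin.last n) *
        qminor q (fun i j => xPrime q X u i j.castSucc) I J hI hJ) := by
  have hbelow : (insert (Fin.last n) (J.map Fin.castSuccOrderEmb.toEmbedding)).filter
      (· < Fin.last n) = J.map Fin.castSuccOrderEmb.toEmbedding := by
    rw [Finset.filter_insert, if_neg (lt_irrefl _),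
      Finset.filter_true_of_mem fun j hj => lt_last_of_mem_map_castSucc hj]
  rw [← orderedProd_rowOp_vacuum, orderedProd_rowOp_insert_zero hq hX hzu huz,
    Module.End.mul_apply, rowOp_apply,
    Finset.sum_eq_single_of_mem _ (Finset.mem_insert_self (Fin.last n) _) fun j _ hne => ?_]
  · rw [Finset.erase_insert (last_notMem_map_castSucc J), hbelow, Finset.card_map, hJ,
      orderedProd_xPrime_vacuum hI hJ]
  · rw [orderedProd_xPrime_vacuum_of_last_mem hq hX hzu, mul_zero, smul_zero]
    exact Finset.mem_erase.2 ⟨hne.symm, Finset.mem_insert_self _ _⟩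

variable (s)

lemma minorIdeal_xPrime_le_minorIdeal :
    minorIdeal q (fun i (j : Fin n) => xPrime q X u i j.castSucc) s ≤ minorIdeal q X (s + 1) := by
  refine minorIdeal_le fun I J hI hJ => ?_
  have hI' : (insert 0 (I.map (Fin.succOrderEmb m).toEmbedding)).card = s + 1 := by
    rw [Finset.card_insert_of_notMem (by simp), Finset.card_map, hI]
  have hJ' : (insert (Fin.last n) (J.map Fin.castSuccOrderEmb.toEmbedding)).card = s + 1 := by
    rw [Finset.card_insert_of_notMem (last_notMem_map_castSucc J), Finset.card_map, hJ]
  have hsolve : qminor q (fun i j => xPrime q X u i j.castSucc) I J hI hJ =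
      ((-q) ^ s)⁻¹ • u * qminor q X _ _ hI' hJ' := by
    rw [qminor_insert_zero_insert_last hq hX hzu huz hI hJ, smul_mul_smul_comm,
      inv_mul_cancel₀ (pow_ne_zero s (neg_ne_zero.2 hq)), one_smul, ← mul_assoc, huz, one_mul]
  rw [hsolve]
  exact (minorIdeal q X (s + 1)).mul_mem_left _ _ (qminor_mem_minorIdeal hI' hJ')

lemma minorIdeal_le_minorIdeal_xPrime :
    minorIdeal q X (s + 1) ≤ minorIdeal q (fun i (j : Fin n) => xPrime q X u i j.castSucc) s := by
  set K := minorIdeal q (fun i (j : Fin n) => xPrime q X u i j.castSucc) s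
  have reduced_mem : ∀ I : Finset (Fin m), I.card = s →
      orderedProd (fun i => rowOp q (xPrime q X u i)) I ∈ coeffSubmodule k (Fin (n + 1)) K :=
    fun I hI => orderedProd_xPrime_mem_coeffSubmodule hq hX hzu le_rfl hI
  refine minorIdeal_le fun I J hI hJ => ?_
  rw [← orderedProd_rowOp_vacuum]
  suffices h : orderedProd (fun i => rowOp q (X i)) I ∈ coeffSubmodule k (Fin (n + 1)) K from h J
  by_cases h0 : 0 ∈ I
  · obtain ⟨I₀, hI₀⟩ := exists_eq_map_succ (Finset.notMem_erase 0 I)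
    have hcard : I₀.card = s := by
      rw [← I₀.card_map, ← hI₀, Finset.card_erase_of_mem h0, hI, Nat.add_sub_cancel]
    rw [← Finset.insert_erase h0, hI₀, orderedProd_rowOp_insert_zero hq hX hzu huz]
    exact rowOp_mul_mem_coeffSubmodule q _ (reduced_mem I₀ hcard)
  · obtain ⟨I₀, rfl⟩ := exists_eq_map_succ h0
    rw [orderedProd_map]
    exact (isRowReduction_xPrime hq hX hzu huz).orderedProd_mem
      ((isSkewFamily_rowOp hq hX).comp Fin.succ)
      (fun _ => rowOp_mul_mem_coeffSubmodule q _) (fun _ _ => rowOp_mul_mem_coeffSubmodule q _)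
      (fun _ _ => mul_leftMul_mem_coeffSubmodule _) reduced_mem ((I₀.card_map _).symm.trans hI)

end

end Pivot

section QuantumMatrixAlgebra

lemma isQMat_qX {k B : Type*} [Field k] [Ring B] [Algebra k B] (q : k) {m n : ℕ}
    (φ : OqM k q m n →ₐ[k] B) : IsQMat q fun i j => φ (qX k q m n i j) := by
  have rel {x y : FreeAlgebra k (Fin m × Fin n)} (h : QMRel k q m n x y) :
      φ (RingQuot.mkAlgHom k _ x) = φ (RingQuot.mkAlgHom k _ y) :=
    congrArg φ (RingQuot.mkAlgHom_rel k h)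
  refine ⟨fun i j l hjl => ?_, fun i r j hir => ?_, fun i r j l hir hjl => ?_,
    fun i r j l hir hjl => sub_eq_iff_eq_add'.2 ?_⟩
  · simpa [qX] using rel (.row i j l hjl)
  · simpa [qX] using rel (.col i r j hir)
  · simpa [qX] using rel (.anti i r j l hir hjl)
  · simpa [qX] using rel (.diag i r j l hir hjl)

end QuantumMatrixAlgebra

end QuantumMatrix

open QuantumMatrix in
theorem localised_ideal_minors_eq_ideal_xprime_minors_general {k B : Type*} [Field k] [Ring B]
    [Algebra k B] {q : k} (hq : q ≠ 0) {m n : ℕ} {X : Fin (m + 1) → Fin (n + 1) → B}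
    (hX : IsQMat q X) {u : B} (hzu : X 0 (Fin.last n) * u = 1) (huz : u * X 0 (Fin.last n) = 1)
    (s : ℕ) :
    minorIdeal q X (s + 1) = minorIdeal q (fun i (j : Fin n) => xPrime q X u i j.castSucc) s :=
  le_antisymm (minorIdeal_le_minorIdeal_xPrime s hq hX hzu huz)
    (minorIdeal_xPrime_le_minorIdeal s hq hX hzu huz)

/-- In `O_q(M_{m,n})[X_{1n}⁻¹]`, the ideal generated by the `t × t` quantum minors of `X`
equals the ideal generated by the `(t-1) × (t-1)` quantum minors of `X'`. -/
theorem localised_ideal_minors_eq_ideal_xprime_minors {k B : Type*} [Field k]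
    [Ring B] [Algebra k B]
    (q : k) (hq : q ≠ 0) {m n : ℕ} (hm : 2 ≤ m) (hn : 2 ≤ n)
    (φ : OqM k q m n →ₐ[k] B) (hφ : Function.Injective φ) (u : B)
    (hu1 : φ (qX k q m n ⟨0, by omega⟩ ⟨n - 1, by omega⟩) * u = 1)
    (hu2 : u * φ (qX k q m n ⟨0, by omega⟩ ⟨n - 1, by omega⟩) = 1)
    (hloc : ∀ b : B, ∃ (a : OqM k q m n) (p : ℕ), b = φ a * u ^ p)
    (t : ℕ) (ht1 : 2 ≤ t) (ht : t ≤ min m n) :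
    TwoSidedIdeal.span {x : B |
        ∃ (I : Finset (Fin m)) (J : Finset (Fin n)) (hI : I.card = t) (hJ : J.card = t),
          x = qminor q (fun i j => φ (qX k q m n i j)) I J hI hJ}
      = TwoSidedIdeal.span {x : B |
          ∃ (I' : Finset (Fin (m - 1))) (J' : Finset (Fin (n - 1)))
            (hI' : I'.card = t - 1) (hJ' : J'.card = t - 1),
            x = qminor q (fun (a : Fin (m - 1)) (b : Fin (n - 1)) =>
              Xp q (by omega) (by omega) φ u ⟨(a : ℕ) + 1, by have := a.isLt; omega⟩
                ⟨(b : ℕ), by have := b.isLt; omega⟩) I' J' hI' hJ'} := by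
  obtain ⟨m, rfl⟩ : ∃ m', m = m' + 1 := ⟨m - 1, by omega⟩
  obtain ⟨n, rfl⟩ : ∃ n', n = n' + 1 := ⟨n - 1, by omega⟩
  obtain ⟨s, rfl⟩ : ∃ s, t = s + 1 := ⟨t - 1, by omega⟩
  exact localised_ideal_minors_eq_ideal_xprime_minors_general hq
    (QuantumMatrix.isQMat_qX q φ) hu1 hu2 s
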